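/- Let G = (V ∪ {s}, E) be a finite sandpile graph and W ⊆ V with the induced subgraph of G on (V ∪ {s}) \ W connected. Suppose ξ ∈ R_{G_W} is minimal in G_W. Then every entry point w ∈ E(ξ,W) satisfies ξ(w) = deg_W(w) = Σ_{v ∈ W} b_{vw} exactly. -/

import Mathlib

open scoped Classical

namespace Sandpile

/-- A finite sandpile multigraph on vertex set `α` (which plays the role of `V ∪ {s}`),
given by a distinguished sink and symmetric edge multiplicities. -/
structure Graph (α : Type*) where
  sink : α
  b : α → α → ℕ

namespace Graph

variable {α : Type*} [Fintype α] [DecidableEq α] (G : Graph α)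

/-- The non-sink vertices (the set `V`). -/
def VSet : Finset α := Finset.univ.erase G.sink

/-- Degree restricted to a finite set of vertices: `deg_F(x) = ∑_{y ∈ F} b_{xy}`. -/
def degIn (F : Finset α) (x : α) : ℕ := ∑ y ∈ F, G.b x y

/-- Total degree `deg_G(x)`. -/
def deg (x : α) : ℕ := ∑ y, G.b x y

/-- `G` is a genuine finite sandpile graph: symmetric multiplicities, no loops, connected. -/
def IsSandpileGraph : Prop :=
  (∀ x y, G.b x y = G.b y x) ∧ (∀ x, G.b x x = 0) ∧
    ∀ x y : α, Relation.ReflTransGen (fun u v => 0 < G.b u v) x y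

/-- Connectivity of the subgraph induced on the vertex set `S`. -/
def ConnectedOn (S : Set α) : Prop :=
  ∀ x ∈ S, ∀ y ∈ S,
    Relation.ReflTransGen (fun u v => u ∈ S ∧ v ∈ S ∧ 0 < G.b u v) x y

/-- A sandpile is stable if every non-sink vertex carries fewer particles than its degree. -/
def Stable (η : α → ℕ) : Prop := ∀ x ∈ G.VSet, η x < G.deg x

/-- `η` is ample for `F` if some vertex of `F` has at least `deg_F` particles. -/
def AmpleFor (η : α → ℕ) (F : Finset α) : Prop := ∃ x ∈ F, G.degIn F x ≤ η x

/-- Dhar's burning test: recurrent = stable and ample for every nonempty `F ⊆ V`. -/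
def Recurrent (η : α → ℕ) : Prop :=
  G.Stable η ∧ ∀ F ⊆ G.VSet, F.Nonempty → G.AmpleFor η F

/-- Remove one particle at `w` (`η - δ_w`). -/
def SubOne (η : α → ℕ) (w : α) : α → ℕ := fun x => if x = w then η x - 1 else η x

/-- `η` and `ξ` agree on `W` (restriction `η_W = ξ_W`). -/
def EqOn (η ξ : α → ℕ) (W : Finset α) : Prop := ∀ x ∈ W, η x = ξ x

/-- `ξ` is (generalized) minimal on `W`: it extends to a recurrent sandpile, and no
recurrent extension stays recurrent after removing a particle from a vertex of `W`.
(`η - δ_w ∉ R_G` holds automatically if `η w = 0`, as then `η - δ_w` is not a configuration.) -/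
def Minimal (W : Finset α) (ξ : α → ℕ) : Prop :=
  (∃ η, G.Recurrent η ∧ EqOn η ξ W) ∧
    ∀ η, G.Recurrent η → EqOn η ξ W → ∀ w ∈ W, ¬(1 ≤ η w ∧ G.Recurrent (SubOne η w))

/-- `ν_G[P]`: the uniform probability of the event `P` under the uniform measure on
recurrent configurations (configurations are normalized to vanish at the sink). -/
noncomputable def prob (P : (α → ℕ) → Prop) : ℝ :=
  (Nat.card {η : α → ℕ // η G.sink = 0 ∧ G.Recurrent η ∧ P η} : ℝ) /
    (Nat.card {η : α → ℕ // η G.sink = 0 ∧ G.Recurrent η} : ℝ)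

/-- The graph Laplacian with the sink row and column deleted. -/
noncomputable def lapRed :
    Matrix {x : α // x ≠ G.sink} {x : α // x ≠ G.sink} ℝ :=
  Matrix.of fun x y =>
    if (x : α) = (y : α) then (G.deg ↑x : ℝ) else -(G.b ↑x ↑y : ℝ)

/-- `H = (Δ')⁻¹`, extended by `0` on the sink. -/
noncomputable def Hfun (x y : α) : ℝ :=
  if hx : x = G.sink then 0
  else if hy : y = G.sink then 0
  else (G.lapRed)⁻¹ ⟨x, hx⟩ ⟨y, hy⟩

/-- Oriented edges of the multigraph `G`: an edge from `p.1` to `p.2.1`, with copy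
index `p.2.2` (parallel edges are distinct). -/
abbrev OEdge (G : Graph α) : Type _ := {p : α × α × ℕ // p.2.2 < G.b p.1 p.2.1}

/-- `K_G(e,f) = δ_{ef} - Y_G(e,f)` where `Y_G` is the transfer current matrix. -/
noncomputable def Kmat (e f : G.OEdge) : ℝ :=
  (if e = f then 1 else 0) -
    (G.Hfun e.1.1 f.1.1 - G.Hfun e.1.1 f.1.2.1 - G.Hfun e.1.2.1 f.1.1 +
      G.Hfun e.1.2.1 f.1.2.1)

/-- Unburnt sets of phase one of the burning algorithm based on `Q`:
`U_0 = V`, `U_i = U_{i-1} \ B_i` with `B_i = {x ∈ U_{i-1} \ Q : η x ≥ deg_{U_{i-1}} x}`. -/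
def U1 (η : α → ℕ) (Q : Finset α) : ℕ → Finset α
  | 0 => G.VSet
  | i + 1 => (U1 η Q i).filter fun x => x ∈ Q ∨ η x < G.degIn (U1 η Q i) x

/-- The final unburnt set `U^{(1)}_I` of phase one (the sequence `U1` is decreasing,
hence stabilizes after at most `|α|` steps). -/
def U1lim (η : α → ℕ) (Q : Finset α) : Finset α := G.U1 η Q (Fintype.card α)

/-- Unburnt sets of phase two of the burning algorithm based on `Q`. -/
def U2 (η : α → ℕ) (Q : Finset α) : ℕ → Finset α
  | 0 => G.U1lim η Q
  | i + 1 => (U2 η Q i).filter fun x => η x < G.degIn (U2 η Q i) x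

/-- Recurrence in the wired graph `G_W` (note `deg_{G_W}(x) = deg_G(x)` for `x ∈ W`,
and `deg_F` for `F ⊆ W` is the same in `G_W` and `G`). -/
def WiredRecurrent (W : Finset α) (ξ : α → ℕ) : Prop :=
  (∀ x ∈ W, ξ x < G.deg x) ∧ ∀ F ⊆ W, F.Nonempty → ∃ x ∈ F, G.degIn F x ≤ ξ x

/-- `ξ` is minimal in the wired graph `G_W`. -/
def WiredMinimal (W : Finset α) (ξ : α → ℕ) : Prop :=
  G.WiredRecurrent W ξ ∧ ∀ w ∈ W, ¬(1 ≤ ξ w ∧ G.WiredRecurrent W (SubOne ξ w))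

/-- Entry points `E(ξ,W)` of `ξ ∈ R_{G_W}`: vertices burnable at the first step. -/
def entryPoints (W : Finset α) (ξ : α → ℕ) : Finset α :=
  W.filter fun w => G.degIn W w ≤ ξ w

/-- `x` is burnable given the burnt set `S`: `η(x) ≥ deg_G(x) − ∑_{y ∈ S} b_{xy}`. -/
def Burnable (η : α → ℕ) (S : Finset α) (x : α) : Prop :=
  G.degIn (Finset.univ \ S) x ≤ η x

/-- A burning sequence starting from the burnt set `S`. -/
def IsBurnSeq (η : α → ℕ) : Finset α → List α → Prop
  | _, [] => True
  | S, x :: l => x ∉ S ∧ G.Burnable η S x ∧ IsBurnSeq η (insert x S) l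

/-- `B` is a burnt set for `η`: some burning sequence from `{s}` burns exactly `B`. -/
def IsBurntSet (η : α → ℕ) (B : Finset α) : Prop :=
  ∃ l : List α, G.IsBurnSeq η {G.sink} l ∧ l.toFinset = B

/-- Reachability within the vertex set `S`. -/
def ReachIn (S : Set α) (x y : α) : Prop :=
  Relation.ReflTransGen (fun u v => u ∈ S ∧ v ∈ S ∧ 0 < G.b u v) x y

/-- `C` is a connected component of the subgraph induced on `(V ∪ {s}) \ W`
that does not contain the sink. -/
def IsHoleComp (W C : Finset α) : Prop :=
  C.Nonempty ∧ G.sink ∉ C ∧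
    ∀ x ∈ C, ∀ y : α, y ∈ C ↔ y ∉ W ∧ G.ReachIn {a : α | a ∉ W} x y

/-- Adjacency induced by a finite set `t` of (undirected, indexed) edges. -/
def edgeRel (t : Finset (Sym2 α × ℕ)) (u v : α) : Prop := ∃ k : ℕ, (s(u, v), k) ∈ t

/-- `t` is a spanning tree of the multigraph `G`: it consists of edges of `G`
(parallel edges distinct), it spans (connected), and every edge is a bridge
(equivalently, it is acyclic). -/
def IsSpanningTree (t : Finset (Sym2 α × ℕ)) : Prop :=
  (∀ p ∈ t, ∃ x y : α, p.1 = s(x, y) ∧ p.2 < G.b x y) ∧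
  (∀ u v : α, Relation.ReflTransGen (edgeRel t) u v) ∧
  ∀ p ∈ t, ∀ x y : α, p.1 = s(x, y) →
    ¬ Relation.ReflTransGen (edgeRel (t.erase p)) x y

/-- Adjacency induced by a set of (undirected, indexed) edges. -/
def edgeRelSet (t : Set (Sym2 α × ℕ)) (u v : α) : Prop := ∃ k : ℕ, (s(u, v), k) ∈ t

/-- Set version of `IsSpanningTree`. -/
def IsSpanningTreeSet (t : Set (Sym2 α × ℕ)) : Prop :=
  (∀ p ∈ t, ∃ x y : α, p.1 = s(x, y) ∧ p.2 < G.b x y) ∧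
  (∀ u v : α, Relation.ReflTransGen (edgeRelSet t) u v) ∧
  ∀ p ∈ t, ∀ x y : α, p.1 = s(x, y) →
    ¬ Relation.ReflTransGen (edgeRelSet (t \ {p})) x y

/-- The step at which `x` burns in phase one (0 for the sink; `sInf ∅ = 0` if `x`
never burns in phase one). -/
noncomputable def p1time (η : α → ℕ) (Q : Finset α) (x : α) : ℕ :=
  sInf {i : ℕ | x ∉ G.U1 η Q i}

/-- The step at which `x` burns in phase two. -/
noncomputable def p2time (η : α → ℕ) (Q : Finset α) (x : α) : ℕ :=
  sInf {i : ℕ | x ∉ G.U2 η Q i}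

/-- Vertices burnt at step `i` of phase one (`B^{(1)}_0 = {s}`). -/
def B1 (η : α → ℕ) (Q : Finset α) : ℕ → Finset α
  | 0 => {G.sink}
  | i + 1 => G.U1 η Q i \ G.U1 η Q (i + 1)

/-- Vertices burnt at step `i` of phase two (`B^{(2)}_0` = everything burnt in phase
one, including the sink). -/
def B2 (η : α → ℕ) (Q : Finset α) : ℕ → Finset α
  | 0 => Finset.univ \ G.U1lim η Q
  | i + 1 => G.U2 η Q i \ G.U2 η Q (i + 1)

/-- The set `B^{(p)}_{i-1}` of vertices burnt at the step preceding the step at which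
`x` burns (in the appropriate phase). -/
noncomputable def prevBurnt (η : α → ℕ) (Q : Finset α) (x : α) : Finset α :=
  if x ∈ G.U1lim η Q then G.B2 η Q (G.p2time η Q x - 1)
  else G.B1 η Q (G.p1time η Q x - 1)

/-- The set `D = B^{(p)}_0 ∪ ⋯ ∪ B^{(p)}_{i-1}` of vertices burnt strictly before `x`
in the phase in which `x` burns. -/
noncomputable def burntBefore (η : α → ℕ) (Q : Finset α) (x : α) : Finset α :=
  if x ∈ G.U1lim η Q then Finset.univ \ G.U2 η Q (G.p2time η Q x - 1)
  else Finset.univ \ G.U1 η Q (G.p1time η Q x - 1)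

/-- `j = η(x) − deg_G(x) + n_x` with `n_x = ∑_{y ∈ D} b_{xy}`. -/
noncomputable def jX (η : α → ℕ) (Q : Finset α) (x : α) : ℕ :=
  η x + G.degIn (G.burntBefore η Q x) x - G.deg x

/-- The defining property of the edge `e_x` of the burning bijection based on `Q`:
`e_x` has tail `x`, head burnt at the previous step, and exactly `j` smaller elements
of `P_x` under the given edge order `lt x`. -/
def EdgeSpec (lt : α → G.OEdge → G.OEdge → Prop) (η : α → ℕ) (Q : Finset α)
    (x : α) (e : G.OEdge) : Prop :=
  e.1.1 = x ∧ e.1.2.1 ∈ G.prevBurnt η Q x ∧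
    {f : G.OEdge | f.1.1 = x ∧ f.1.2.1 ∈ G.prevBurnt η Q x ∧ lt x f e}.ncard =
      G.jX η Q x

/-- The (oriented) spanning tree `t(η) = {e_x : x ∈ V}` assigned to `η` by the
burning bijection based on `Q`. -/
def treeOf (lt : α → G.OEdge → G.OEdge → Prop) (η : α → ℕ) (Q : Finset α) :
    Set G.OEdge :=
  {e | ∃ x ∈ G.VSet, G.EdgeSpec lt η Q x e}

/-- Forget the orientation of an oriented edge. -/
def undir (e : G.OEdge) : Sym2 α × ℕ := (s(e.1.1, e.1.2.1), e.1.2.2)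

/-- Total burning order: phase-one vertices first (at their phase-one step), then
phase-two vertices. -/
noncomputable def burnOrder (η : α → ℕ) (Q : Finset α) (x : α) : ℕ :=
  if x ∈ G.U1lim η Q then Fintype.card α + 1 + G.p2time η Q x else G.p1time η Q x

/-- Edge multiplicities of the auxiliary graph `G_W^*` (on vertex set `W ∪ {s}`):
`b*_{xy} = b_{xy}` for `x,y ∈ W`; `b*_{xs} = ∑_{z ∉ W} b_{xz}` for `x ∈ Q` and
`b*_{xs} = 0` for `x ∈ W \ Q`. -/
def bstar (Q W : Finset α) (x y : α) : ℕ :=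
  if x ∈ W ∧ y ∈ W then G.b x y
  else if x ∈ W ∧ y = G.sink then
    if x ∈ Q then ∑ z ∈ Finset.univ \ W, G.b x z else 0
  else if y ∈ W ∧ x = G.sink then
    if y ∈ Q then ∑ z ∈ Finset.univ \ W, G.b z y else 0
  else 0

/-- Recurrence in the auxiliary graph `G_W^*`. -/
def StarRecurrent (Q W : Finset α) (ζ : α → ℕ) : Prop :=
  (∀ x ∈ W, ζ x < ∑ y ∈ insert G.sink W, G.bstar Q W x y) ∧
    ∀ F ⊆ W, F.Nonempty → ∃ x ∈ F, (∑ y ∈ F, G.bstar Q W x y) ≤ ζ x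

end Graph

end Sandpile

open Sandpile

/-!
Ampleness for `F ⊆ W` only compares `ξ` with `deg_F ≤ deg_W`, so the burning test on `W` cannot see
how far `ξ` exceeds `deg_W`. A particle above the level `deg_W` can therefore be removed without
losing recurrence, and a minimal configuration has none.
-/

namespace Sandpile.Graph

section

variable {α : Type*} [DecidableEq α] (η : α → ℕ)

lemma subOne_self (w : α) : SubOne η w w = η w - 1 :=
  if_pos rfl

lemma subOne_of_ne {w x : α} (hxw : x ≠ w) : SubOne η w x = η x :=
  if_neg hxw

lemma subOne_le (w x : α) : SubOne η w x ≤ η x := by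
  obtain rfl | hxw := eq_or_ne x w
  · exact (subOne_self η x).trans_le (Nat.sub_le _ _)
  · exact (subOne_of_ne η hxw).le

end

variable {α : Type*} {G : Graph α} {W : Finset α} {ξ ξ' : α → ℕ}

lemma degIn_mono {F : Finset α} (hFW : F ⊆ W) (x : α) : G.degIn F x ≤ G.degIn W x :=
  Finset.sum_le_sum_of_subset hFW

lemma WiredRecurrent.of_le_of_min_degIn_le [Fintype α] (hξ : G.WiredRecurrent W ξ)
    (hle : ∀ x ∈ W, ξ' x ≤ ξ x) (hge : ∀ x ∈ W, min (ξ x) (G.degIn W x) ≤ ξ' x) :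
    G.WiredRecurrent W ξ' := by
  obtain ⟨hstable, hample⟩ := hξ
  refine ⟨fun x hx => (hle x hx).trans_lt (hstable x hx), fun F hFW hF => ?_⟩
  obtain ⟨x, hxF, hFx⟩ := hample F hFW hF
  exact ⟨x, hxF, (le_min hFx (degIn_mono hFW x)).trans (hge x (hFW hxF))⟩

lemma WiredRecurrent.subOne_of_degIn_lt [Fintype α] [DecidableEq α] {w : α}
    (hξ : G.WiredRecurrent W ξ) (hw : G.degIn W w < ξ w) :
    G.WiredRecurrent W (SubOne ξ w) := by
  refine hξ.of_le_of_min_degIn_le (fun x _ => subOne_le ξ w x) fun x _ => ?_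
  obtain rfl | hxw := eq_or_ne x w
  · exact (min_le_right _ _).trans ((Nat.le_sub_one_of_lt hw).trans_eq (subOne_self ξ x).symm)
  · exact (min_le_left _ _).trans_eq (subOne_of_ne ξ hxw).symm

lemma WiredMinimal.le_degIn [Fintype α] [DecidableEq α] {w : α} (hξ : G.WiredMinimal W ξ)
    (hwW : w ∈ W) : ξ w ≤ G.degIn W w := by
  by_contra! hlt
  exact hξ.2 w hwW ⟨Nat.one_le_of_lt hlt, hξ.1.subOne_of_degIn_lt hlt⟩

end Sandpile.Graph

theorem statement_7_general {α : Type*} [Fintype α] [DecidableEq α] (G : Sandpile.Graph α)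
    (W : Finset α) (ξ : α → ℕ) (hmin : G.WiredMinimal W ξ) :
    ∀ w ∈ G.entryPoints W ξ, ξ w = G.degIn W w := by
  intro w hw
  obtain ⟨hwW, hentry⟩ := Finset.mem_filter.mp hw
  exact (hmin.le_degIn hwW).antisymm hentry

/-- Lemma 2 (ii). Every entry point `w` of a minimal configuration
in the wired graph `G_W` satisfies `ξ(w) = deg_W(w)` exactly. -/
theorem statement_7 {α : Type*} [Fintype α] [DecidableEq α] (G : Sandpile.Graph α)
    (hG : G.IsSandpileGraph) (W : Finset α) (hWs : G.sink ∉ W)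
    (hconn : G.ConnectedOn {x : α | x ∉ W}) (ξ : α → ℕ)
    (hmin : G.WiredMinimal W ξ) :
    ∀ w ∈ G.entryPoints W ξ, ξ w = G.degIn W w :=
  statement_7_general G W ξ hmin
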